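/- arXiv:math/0607563 — 2 statements merged into one kernel-verified Lean document; each statement's English description precedes it below -/
import Mathlib

section
/- Let k ≥ 1, let Q be a nonempty finite set with decidable equality, δ : Q → ZMod k → Q a transition function, c : Q → ZMod k a labeling, and q₀ : Q an initial state. Let act : Q → List (ZMod k) → List (ZMod k) be the unique function satisfying act q [] = [] and act q (a :: u) = (a + c q) :: act (δ q a) u; this is the finite state automorphism of the rooted k-ary tree computed by the automaton started at q₀. Let A : Matrix Q Q (ZMod k) be the incidence matrix A q r = (|{a : ZMod k | δ q a = r}| : ZMod k) and let v = c. Then act q₀ is spherically transitive — for every n and all lists u, w of length n over ZMod k there exists m with (act q₀)^[m] u = w — if and only if ((A^j).mulVec v) q₀ is a unit of ZMod k for every j ≤ k^(Fintype.card Q). -/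
/-!
The action on words of length `n + 1` is the skew product of the action on words of length `n`
with the cocycle `u ↦ c (q · u)`, where `q · u` is the state reached from `q` after reading `u`.
If the action on words of length `n` is a single cycle, running once around this cycle translates
the last letter by the sum `s n` of the cocycle over all words of length `n`, so transitivity
passes to length `n + 1` exactly when `s n` generates the alphabet. Summing over the last letter
first gives `s n = (A ^ n c) q`. Finally `n ↦ A ^ n c` is an orbit in the finite set
`Q → ZMod k`, so all its values occur among the first `k ^ |Q|` ones.
-/

open Function

section ForwardTransitive

variable {α β : Type*} {f : α → α} {g : β → β}

/-- Transitivity of a self-map: every point is reached from every point by forward iteration. -/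
def ForwardTransitive (f : α → α) : Prop :=
  ∀ x y, ∃ m : ℕ, f^[m] x = y

theorem ForwardTransitive.of_subsingleton [Subsingleton α] (f : α → α) : ForwardTransitive f :=
  fun _ _ => ⟨0, Subsingleton.elim _ _⟩

theorem ForwardTransitive.of_semiconj (hf : ForwardTransitive f) {h : α → β}
    (hh : Surjective h) (hfg : Semiconj h f g) : ForwardTransitive g := by
  intro x y
  obtain ⟨x, rfl⟩ := hh x
  obtain ⟨y, rfl⟩ := hh y
  obtain ⟨m, rfl⟩ := hf x y
  exact ⟨m, ((hfg.iterate_right m).eq x).symm⟩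

theorem forwardTransitive_congr (e : α ≃ β) (hfg : Semiconj e f g) :
    ForwardTransitive f ↔ ForwardTransitive g :=
  ⟨fun hf => hf.of_semiconj e.surjective hfg,
    fun hg => hg.of_semiconj e.symm.surjective
      (hfg.inverse_left e.symm_apply_apply e.apply_symm_apply)⟩

theorem ForwardTransitive.mem_periodicPts (hf : ForwardTransitive f) (x : α) :
    x ∈ periodicPts f := by
  obtain ⟨m, hm⟩ := hf (f x) x
  exact ⟨m + 1, m.succ_pos, by rwa [IsPeriodicPt, IsFixedPt, iterate_succ_apply]⟩

theorem ForwardTransitive.birkhoffSum_minimalPeriod [Fintype α] {M : Type*} [AddCommMonoid M]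
    (hf : ForwardTransitive f) (φ : α → M) (x : α) :
    birkhoffSum f φ (minimalPeriod f x) x = ∑ y, φ y := by
  refine Finset.sum_nbij (f^[·] x) (fun _ _ => Finset.mem_univ _) ?_ ?_ fun _ _ => rfl
  · rw [Finset.coe_range]
    exact iterate_injOn_Iio_minimalPeriod
  · intro y _
    obtain ⟨m, rfl⟩ := hf x y
    have hpos := minimalPeriod_pos_of_mem_periodicPts (hf.mem_periodicPts x)
    exact ⟨m % minimalPeriod f x, by simpa using Nat.mod_lt m hpos, iterate_mod_minimalPeriod_eq⟩

end ForwardTransitive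

theorem exists_lt_card_iterate_eq {α : Type*} [Fintype α] (f : α → α) (x : α) (n : ℕ) :
    ∃ j < Fintype.card α, f^[j] x = f^[n] x := by
  induction n using Nat.strong_induction_on with
  | _ n ih =>
    by_cases hn : n < Fintype.card α
    · exact ⟨n, hn, rfl⟩
    obtain ⟨i, l, hil, hl, heq⟩ :
        ∃ i l, i < l ∧ l ≤ Fintype.card α ∧ f^[i] x = f^[l] x := by
      obtain ⟨i, l, hne, heq⟩ := Fintype.exists_ne_map_eq_of_card_lt
        (fun i : Fin (Fintype.card α + 1) => f^[i] x) (by simp)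
      rcases lt_or_gt_of_ne hne with h | h
      · exact ⟨i, l, h, Nat.lt_succ_iff.1 l.2, heq⟩
      · exact ⟨l, i, h, Nat.lt_succ_iff.1 i.2, heq.symm⟩
    obtain ⟨j, hj, hjn⟩ := ih (n - l + i) (by lia)
    refine ⟨j, hj, ?_⟩
    calc f^[j] x = f^[n - l] (f^[i] x) := by rw [hjn, iterate_add_apply]
      _ = f^[n - l] (f^[l] x) := by rw [heq]
      _ = f^[n] x := by rw [← iterate_add_apply, Nat.sub_add_cancel (by lia)]

section SkewProduct

variable {α G : Type*}

/-- The skew product of `f` with the cocycle `φ`: the self-map of `α × G` over `f` that translates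
the fibre over `x` by `φ x`. -/
def skewProduct [Add G] (f : α → α) (φ : α → G) (p : α × G) : α × G :=
  (f p.1, p.2 + φ p.1)

theorem skewProduct_iterate [AddCommMonoid G] (f : α → α) (φ : α → G) (m : ℕ) (x : α) (a : G) :
    (skewProduct f φ)^[m] (x, a) = (f^[m] x, a + birkhoffSum f φ m x) := by
  induction m with
  | zero => simp
  | succ m ih =>
    rw [iterate_succ_apply', ih, skewProduct, iterate_succ_apply', birkhoffSum_succ, add_assoc]

theorem ForwardTransitive.skewProduct_iterate_minimalPeriod_mul [Fintype α] [AddCommMonoid G]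
    {f : α → α} (hf : ForwardTransitive f) (φ : α → G) (t : ℕ) (x : α) (a : G) :
    (skewProduct f φ)^[minimalPeriod f x * t] (x, a) = (x, a + t • ∑ y, φ y) := by
  have once_around (b : G) :
      (skewProduct f φ)^[minimalPeriod f x] (x, b) = (x, b + ∑ y, φ y) := by
    rw [skewProduct_iterate, iterate_minimalPeriod, hf.birkhoffSum_minimalPeriod]
  rw [iterate_mul]
  induction t with
  | zero => simp
  | succ t ih => rw [iterate_succ_apply', ih, once_around, succ_nsmul, add_assoc]

theorem ForwardTransitive.skewProduct_iff [Fintype α] [Nonempty α] [AddCommGroup G]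
    {f : α → α} (hf : ForwardTransitive f) (φ : α → G) :
    ForwardTransitive (skewProduct f φ) ↔ AddSubmonoid.multiples (∑ x, φ x) = ⊤ := by
  rw [AddSubmonoid.eq_top_iff']
  constructor
  · intro h b
    obtain ⟨x⟩ := ‹Nonempty α›
    obtain ⟨m, hm⟩ := h (x, 0) (x, b)
    have return_to_x : IsPeriodicPt f m x := by
      rw [skewProduct_iterate] at hm
      exact congrArg Prod.fst hm
    obtain ⟨t, rfl⟩ := return_to_x.minimalPeriod_dvd
    rw [hf.skewProduct_iterate_minimalPeriod_mul, zero_add] at hm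
    exact ⟨t, congrArg Prod.snd hm⟩
  · rintro h ⟨x, a⟩ ⟨y, b⟩
    obtain ⟨m, rfl⟩ := hf x y
    obtain ⟨t, ht : t • ∑ x, φ x = b - (a + birkhoffSum f φ m x)⟩ :=
      h (b - (a + birkhoffSum f φ m x))
    refine ⟨minimalPeriod f (f^[m] x) * t + m, ?_⟩
    rw [iterate_add_apply, skewProduct_iterate f φ m, hf.skewProduct_iterate_minimalPeriod_mul, ht,
      add_sub_cancel]

end SkewProduct

theorem multiples_zmod_eq_top_iff {k : ℕ} [NeZero k] (s : ZMod k) :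
    AddSubmonoid.multiples s = ⊤ ↔ IsUnit s := by
  rw [AddSubmonoid.eq_top_iff']
  constructor
  · intro h
    obtain ⟨t, ht : t • s = 1⟩ := h 1
    exact .of_mul_eq_one_right (t : ZMod k) (by rw [← nsmul_eq_mul, ht])
  · intro hs b
    obtain ⟨r, hr⟩ := hs.exists_left_inv
    refine ⟨(b * r).val, ?_⟩
    simp only [nsmul_eq_mul, ZMod.natCast_zmod_val, mul_assoc, hr, mul_one]

section Transfer

variable {Q α : Type*} [Fintype α] (δ : Q → α → Q)

/-- The transfer operator of the transition function `δ`: sum a function on the states over all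
one-letter transitions. -/
def transfer {M : Type*} [AddCommMonoid M] (f : Q → M) (q : Q) : M :=
  ∑ a, f (δ q a)

/-- The incidence matrix of the transition graph of `δ`, with multiplicities cast into `R`. -/
def incidenceMatrix (R : Type*) [NatCast R] [DecidableEq Q] : Matrix Q Q R :=
  .of fun q r => ((Finset.univ.filter fun a => δ q a = r).card : R)

theorem incidenceMatrix_mulVec {R : Type*} [NonAssocSemiring R] [Fintype Q] [DecidableEq Q]
    (f : Q → R) : (incidenceMatrix δ R).mulVec f = transfer δ f := by
  ext q
  calc ∑ r, incidenceMatrix δ R q r * f r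
      = ∑ r, ∑ a with δ q a = r, f r := by simp [incidenceMatrix]
    _ = transfer δ f q := Finset.sum_fiberwise' _ _ _

theorem incidenceMatrix_pow_mulVec {R : Type*} [Semiring R] [Fintype Q] [DecidableEq Q]
    (n : ℕ) (f : Q → R) : (incidenceMatrix δ R ^ n).mulVec f = (transfer δ)^[n] f := by
  induction n with
  | zero => simp
  | succ n ih =>
    rw [pow_succ', ← Matrix.mulVec_mulVec, ih, incidenceMatrix_mulVec, iterate_succ_apply']

end Transfer

section Words

variable {α : Type*}

/-- Words of length `n + 1`, split into all letters but the last one and the last letter. -/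
def vectorSnocEquiv (α : Type*) (n : ℕ) : List.Vector α n × α ≃ List.Vector α (n + 1) where
  toFun p := ⟨p.1.toList ++ [p.2], by simp⟩
  invFun u := (⟨u.toList.dropLast, by simp⟩, u.toList.getLast (by simp [← List.length_pos_iff]))
  left_inv p := by ext <;> simp
  right_inv u := List.Vector.toList_injective (List.dropLast_append_getLast _)

@[simp]
theorem toList_vectorSnocEquiv {n : ℕ} (p : List.Vector α n × α) :
    (vectorSnocEquiv α n p).toList = p.1.toList ++ [p.2] :=
  rfl

theorem sum_foldl_eq_iterate_transfer {Q M : Type*} [Fintype α] [AddCommMonoid M]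
    (δ : Q → α → Q) (n : ℕ) (f : Q → M) (q : Q) :
    ∑ u : List.Vector α n, f (u.toList.foldl δ q) = (transfer δ)^[n] f q := by
  induction n generalizing f with
  | zero => simp
  | succ n ih =>
    rw [iterate_succ_apply, ← ih, ← (vectorSnocEquiv α n).sum_comp, Fintype.sum_prod_type]
    simp [transfer]

end Words

section TreeAction

variable {Q G : Type*}

/-- The tree endomorphism computed from the state `q` of the automaton with transition function `δ`
whose state `q` translates the letter being read by `c q`. -/
def treeAct [Add G] (δ : Q → G → Q) (c : Q → G) : Q → List G → List G
  | _, [] => []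
  | q, a :: u => (a + c q) :: treeAct δ c (δ q a) u

@[simp]
theorem length_treeAct [Add G] (δ : Q → G → Q) (c : Q → G) (q : Q) (u : List G) :
    (treeAct δ c q u).length = u.length := by
  induction u generalizing q with
  | nil => rfl
  | cons a u ih => simp [treeAct, ih]

theorem treeAct_concat [Add G] (δ : Q → G → Q) (c : Q → G) (q : Q) (u : List G) (a : G) :
    treeAct δ c q (u ++ [a]) = treeAct δ c q u ++ [a + c (u.foldl δ q)] := by
  induction u generalizing q with
  | nil => rfl
  | cons b u ih => simp [treeAct, ih]

theorem eq_treeAct [Add G] {δ : Q → G → Q} {c : Q → G} {act : Q → List G → List G}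
    (hnil : ∀ q, act q [] = [])
    (hcons : ∀ q a u, act q (a :: u) = (a + c q) :: act (δ q a) u) :
    act = treeAct δ c := by
  funext q u
  induction u generalizing q with
  | nil => exact hnil q
  | cons a u ih => rw [hcons, ih, treeAct]

/-- The restriction of `treeAct` to level `n` of the tree. -/
def levelAct [Add G] (δ : Q → G → Q) (c : Q → G) (q : Q) (n : ℕ) (u : List.Vector G n) :
    List.Vector G n :=
  ⟨treeAct δ c q u.toList, by simp⟩

theorem forwardTransitive_levelAct_iff [Add G] (δ : Q → G → Q) (c : Q → G) (q : Q) (n : ℕ) :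
    ForwardTransitive (levelAct δ c q n) ↔
      ∀ u w : List G, u.length = n → w.length = n → ∃ m : ℕ, (treeAct δ c q)^[m] u = w := by
  have toList_iterate (m : ℕ) (u : List.Vector G n) :
      ((levelAct δ c q n)^[m] u).toList = (treeAct δ c q)^[m] u.toList :=
    Semiconj.iterate_right (f := List.Vector.toList) (fun _ => rfl) m u
  constructor
  · intro h u w hu hw
    obtain ⟨m, hm⟩ := h ⟨u, hu⟩ ⟨w, hw⟩
    exact ⟨m, (toList_iterate m ⟨u, hu⟩).symm.trans (congrArg List.Vector.toList hm)⟩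
  · intro h u w
    obtain ⟨m, hm⟩ := h u.toList w.toList u.toList_length w.toList_length
    exact ⟨m, List.Vector.toList_injective ((toList_iterate m u).trans hm)⟩

theorem semiconj_vectorSnocEquiv [Add G] (δ : Q → G → Q) (c : Q → G) (q : Q) (n : ℕ) :
    Semiconj (vectorSnocEquiv G n)
      (skewProduct (levelAct δ c q n) fun u => c (u.toList.foldl δ q))
      (levelAct δ c q (n + 1)) :=
  fun p => List.Vector.toList_injective (treeAct_concat δ c q p.1.toList p.2).symm

theorem ForwardTransitive.levelAct_succ_iff [Fintype G] [AddCommGroup G] {δ : Q → G → Q}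
    {c : Q → G} {q : Q} {n : ℕ} (h : ForwardTransitive (levelAct δ c q n)) :
    ForwardTransitive (levelAct δ c q (n + 1)) ↔
      AddSubmonoid.multiples ((transfer δ)^[n] c q) = ⊤ := by
  have : Nonempty (List.Vector G n) := ⟨.replicate n 0⟩
  rw [← forwardTransitive_congr _ (semiconj_vectorSnocEquiv δ c q n), h.skewProduct_iff,
    sum_foldl_eq_iterate_transfer]

theorem forall_forwardTransitive_levelAct_iff [Fintype G] [AddCommGroup G] (δ : Q → G → Q)
    (c : Q → G) (q : Q) :
    (∀ n, ForwardTransitive (levelAct δ c q n)) ↔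
      ∀ n, AddSubmonoid.multiples ((transfer δ)^[n] c q) = ⊤ := by
  refine ⟨fun h n => (h n).levelAct_succ_iff.1 (h (n + 1)), fun h n => ?_⟩
  induction n with
  | zero => exact .of_subsingleton _
  | succ n ih => exact ih.levelAct_succ_iff.2 (h n)

end TreeAction

/-- A finite state element of the infinite iterated wreath product
`ℤ/kℤ ≀ ℤ/kℤ ≀ ⋯`, computed by a finite invertible automaton, is spherically
transitive if and only if the coefficients `((A ^ j).mulVec v) q₀` are units
of `ZMod k` for all `j ≤ k ^ (card Q)`. -/
theorem finite_state_spherically_transitive_iff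
    (k : ℕ) [NeZero k]
    (Q : Type*) [Fintype Q] [DecidableEq Q] [Nonempty Q]
    (δ : Q → ZMod k → Q) (c : Q → ZMod k) (q₀ : Q)
    (act : Q → List (ZMod k) → List (ZMod k))
    (hnil : ∀ q, act q [] = [])
    (hcons : ∀ q a u, act q (a :: u) = (a + c q) :: act (δ q a) u)
    (A : Matrix Q Q (ZMod k))
    (hA : ∀ q r, A q r = ((Finset.univ.filter fun a : ZMod k => δ q a = r).card : ZMod k))
    (v : Q → ZMod k) (hv : v = c) :
    (∀ (n : ℕ) (u w : List (ZMod k)), u.length = n → w.length = n →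
        ∃ m : ℕ, (act q₀)^[m] u = w) ↔
      (∀ j ≤ k ^ Fintype.card Q, IsUnit (((A ^ j).mulVec v) q₀)) := by
  subst hv
  obtain rfl := eq_treeAct hnil hcons
  obtain rfl : A = incidenceMatrix δ (ZMod k) := Matrix.ext hA
  simp only [incidenceMatrix_pow_mulVec]
  calc (∀ (n : ℕ) (u w : List (ZMod k)), u.length = n → w.length = n →
        ∃ m : ℕ, (treeAct δ v q₀)^[m] u = w)
      ↔ ∀ n, ForwardTransitive (levelAct δ v q₀ n) := by
        simp only [forwardTransitive_levelAct_iff]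
    _ ↔ ∀ n, IsUnit ((transfer δ)^[n] v q₀) := by
        simp only [forall_forwardTransitive_levelAct_iff, multiples_zmod_eq_top_iff]
    _ ↔ ∀ j ≤ k ^ Fintype.card Q, IsUnit ((transfer δ)^[j] v q₀) := by
        refine ⟨fun h j _ => h j, fun h n => ?_⟩
        obtain ⟨j, hj, hjn⟩ := exists_lt_card_iterate_eq (transfer δ) v n
        rw [Fintype.card_fun, ZMod.card] at hj
        exact hjn ▸ h j hj.le
end

section
/- Let k ≥ 1 be a natural number and M a finite additive commutative group. Let (Q₁, δ₁, c₁, q₁) and (Q₂, δ₂, c₂, q₂) be two finite automata over the alphabet Fin k with values in M: Qᵢ are finite sets with decidable equality, δᵢ : Qᵢ → Fin k → Qᵢ, cᵢ : Qᵢ → M, and qᵢ are initial states. Then the equality of level sums ∑_{w : Fin j → Fin k} c₁ (List.foldl δ₁ q₁ (List.ofFn w)) = ∑_{w : Fin j → Fin k} c₂ (List.foldl δ₂ q₂ (List.ofFn w)) holds for every natural number j if and only if it holds for every j ≤ (Fintype.card M)^(Fintype.card Q₁ + Fintype.card Q₂). -/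
/-!
Let `T` be the endomorphism of the free module on the states that sends a state to the sum of its
successors. The level sums of an automaton are the values of a linear map on the orbit of a basis
vector under `T`. By the Cayley-Hamilton theorem, the orbit of a vector of a free module of rank `n`
is contained in the span of its first `n` terms, so two linear maps that agree on these terms agree
on the whole orbit. Applied over `ℤ` to the direct sum of the modules of the two automata, this
shows that it is enough to compare the first `card Q₁ + card Q₂` level sums, for values in any
abelian group. If `M` is nontrivial, then `n < card M ^ n`.
-/

section CayleyHamilton

open Module Polynomial

variable {R V W : Type*} [CommRing R] [Nontrivial R] [AddCommGroup V] [Module R V]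
  [Module.Free R V] [Module.Finite R V]

theorem pow_apply_mem_span_pow_apply_lt_finrank (f : End R V) (v : V) (j : ℕ) :
    (f ^ j) v ∈ Submodule.span R ((fun i => (f ^ i) v) '' Set.Iio (finrank R V)) := by
  set r := X ^ j %ₘ f.charpoly
  have degree_lt : r.degree < finrank R V := by
    rw [← f.charpoly_natDegree, ← degree_eq_natDegree f.charpoly_monic.ne_zero]
    exact degree_modByMonic_lt _ f.charpoly_monic
  have expansion : (f ^ j) v = ∑ i ∈ r.support, r.coeff i • (f ^ i) v := by
    rw [f.pow_eq_aeval_mod_charpoly, aeval_def, eval₂_eq_sum, Polynomial.sum,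
      LinearMap.sum_apply]
    rfl
  rw [expansion]
  refine Submodule.sum_mem _ fun i hi => Submodule.smul_mem _ _ <|
    Submodule.subset_span <| Set.mem_image_of_mem _ ?_
  exact_mod_cast (le_degree_of_mem_supp i hi).trans_lt degree_lt

theorem apply_pow_eq_of_forall_lt_finrank [AddCommMonoid W] [Module R W] (f : End R V)
    (φ ψ : V →ₗ[R] W) (v : V) (h : ∀ i < finrank R V, φ ((f ^ i) v) = ψ ((f ^ i) v)) (j : ℕ) :
    φ ((f ^ j) v) = ψ ((f ^ j) v) :=
  LinearMap.eqOn_span (Set.forall_mem_image.2 h) (pow_apply_mem_span_pow_apply_lt_finrank f v j)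

end CayleyHamilton

section LevelSum

variable {A Q M : Type*} [Fintype A] [AddCommMonoid M]

/-- The sum of the labels of the states reached from `q` by the words of length `j`, which is the
coefficient of `t ^ j` in the image in `M[[t]]` of the finite state element defined by `q`. -/
def levelSum (δ : Q → A → Q) (c : Q → M) (q : Q) (j : ℕ) : M :=
  ∑ w : Fin j → A, c (List.foldl δ q (List.ofFn w))

theorem levelSum_zero (δ : Q → A → Q) (c : Q → M) (q : Q) : levelSum δ c q 0 = c q := by
  simp [levelSum]

theorem levelSum_succ (δ : Q → A → Q) (c : Q → M) (q : Q) (j : ℕ) :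
    levelSum δ c q (j + 1) = ∑ a, levelSum δ c (δ q a) j := by
  simp only [levelSum]
  rw [← (Fin.consEquiv fun _ => A).sum_comp, Fintype.sum_prod_type]
  simp [Fin.consEquiv]

/-- The transfer operator of an automaton: the endomorphism of the free module on the states that
sends a state to the sum of its successors, counted with multiplicity. -/
noncomputable def transferOperator (R : Type*) [Semiring R] (δ : Q → A → Q) :
    Module.End R (Q →₀ R) :=
  Finsupp.linearCombination R fun q => ∑ a, Finsupp.single (δ q a) 1

variable (R : Type*) [Semiring R]

theorem transferOperator_single (δ : Q → A → Q) (q : Q) :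
    transferOperator R δ (Finsupp.single q 1) = ∑ a, Finsupp.single (δ q a) 1 := by
  simp [transferOperator]

theorem linearCombination_transferOperator_pow_single [Module R M] (δ : Q → A → Q) (c : Q → M)
    (q : Q) (j : ℕ) :
    Finsupp.linearCombination R c ((transferOperator R δ ^ j) (Finsupp.single q 1)) =
      levelSum δ c q j := by
  induction j generalizing q with
  | zero => simp [levelSum_zero]
  | succ j ih =>
    rw [pow_succ, Module.End.mul_apply, transferOperator_single, map_sum, map_sum, levelSum_succ]
    exact Finset.sum_congr rfl fun a _ => ih (δ q a)

end LevelSum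

theorem prodMap_pow_apply {R V₁ V₂ : Type*} [Semiring R] [AddCommMonoid V₁] [AddCommMonoid V₂]
    [Module R V₁] [Module R V₂] (f : Module.End R V₁) (g : Module.End R V₂) (v : V₁ × V₂) (j : ℕ) :
    (LinearMap.prodMap f g ^ j) v = ((f ^ j) v.1, (g ^ j) v.2) := by
  simp only [Module.End.pow_apply, LinearMap.coe_prodMap, Prod.map_iterate, Prod.map_apply']

theorem level_sums_eq_iff_finite_check_general {A₁ A₂ Q₁ Q₂ M : Type*} [Fintype A₁] [Fintype A₂]
    [Fintype Q₁] [Fintype Q₂] [AddCommGroup M] (δ₁ : Q₁ → A₁ → Q₁) (δ₂ : Q₂ → A₂ → Q₂)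
    (c₁ : Q₁ → M) (c₂ : Q₂ → M) (q₁ : Q₁) (q₂ : Q₂) :
    (∀ j, levelSum δ₁ c₁ q₁ j = levelSum δ₂ c₂ q₂ j) ↔
      ∀ j < Fintype.card Q₁ + Fintype.card Q₂, levelSum δ₁ c₁ q₁ j = levelSum δ₂ c₂ q₂ j := by
  refine ⟨fun h j _ => h j, fun h => ?_⟩
  let T := (transferOperator ℤ δ₁).prodMap (transferOperator ℤ δ₂)
  let φ₁ := Finsupp.linearCombination ℤ c₁ ∘ₗ LinearMap.fst ℤ (Q₁ →₀ ℤ) (Q₂ →₀ ℤ)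
  let φ₂ := Finsupp.linearCombination ℤ c₂ ∘ₗ LinearMap.snd ℤ (Q₁ →₀ ℤ) (Q₂ →₀ ℤ)
  let v : (Q₁ →₀ ℤ) × (Q₂ →₀ ℤ) := (Finsupp.single q₁ 1, Finsupp.single q₂ 1)
  have apply_orbit₁ (j : ℕ) : φ₁ ((T ^ j) v) = levelSum δ₁ c₁ q₁ j := by
    simp [φ₁, T, v, prodMap_pow_apply, linearCombination_transferOperator_pow_single]
  have apply_orbit₂ (j : ℕ) : φ₂ ((T ^ j) v) = levelSum δ₂ c₂ q₂ j := by
    simp [φ₂, T, v, prodMap_pow_apply, linearCombination_transferOperator_pow_single]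
  have finrank_eq : Module.finrank ℤ ((Q₁ →₀ ℤ) × (Q₂ →₀ ℤ)) =
      Fintype.card Q₁ + Fintype.card Q₂ := by
    simp only [Module.finrank_prod, Module.finrank_finsupp_self]
  simp only [← apply_orbit₁, ← apply_orbit₂, ← finrank_eq] at h ⊢
  exact apply_pow_eq_of_forall_lt_finrank T φ₁ φ₂ v h

/-- Two finite state elements of an infinite iterated wreath product have the
same image in the abelianization (all level sums agree) if and only if the
level sums agree up to `(card M) ^ (card Q₁ + card Q₂)`. -/
theorem level_sums_eq_iff_finite_check
    (k : ℕ) (hk : 1 ≤ k) (M : Type*) [AddCommGroup M] [Fintype M]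
    (Q₁ Q₂ : Type*) [Fintype Q₁] [DecidableEq Q₁] [Fintype Q₂] [DecidableEq Q₂]
    (δ₁ : Q₁ → Fin k → Q₁) (δ₂ : Q₂ → Fin k → Q₂)
    (c₁ : Q₁ → M) (c₂ : Q₂ → M) (q₁ : Q₁) (q₂ : Q₂) :
    (∀ j : ℕ, ∑ w : Fin j → Fin k, c₁ (List.foldl δ₁ q₁ (List.ofFn w)) =
        ∑ w : Fin j → Fin k, c₂ (List.foldl δ₂ q₂ (List.ofFn w))) ↔
      (∀ j ≤ Fintype.card M ^ (Fintype.card Q₁ + Fintype.card Q₂),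
        ∑ w : Fin j → Fin k, c₁ (List.foldl δ₁ q₁ (List.ofFn w)) =
          ∑ w : Fin j → Fin k, c₂ (List.foldl δ₂ q₂ (List.ofFn w))) := by
  refine ⟨fun h j _ => h j, fun h => ?_⟩
  rcases subsingleton_or_nontrivial M with _ | _
  · exact fun j => Subsingleton.elim _ _
  · exact (level_sums_eq_iff_finite_check_general δ₁ δ₂ c₁ c₂ q₁ q₂).2 fun j hj =>
      h j (hj.trans (Nat.lt_pow_self Fintype.one_lt_card)).le
end
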